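/- (Main theorem, high-noise most-informative-function conjecture.) There exists an absolute constant δ > 0 such that for every n, every ε ∈ [0,1/2] with (1−2ε)² ≤ δ, and every boolean function f : {0,1}ⁿ → {0,1}, one has I(f(X);Y) ≤ 1 − H(ε), where X is uniform on {0,1}ⁿ and Y is obtained from X by flipping each coordinate independently with probability ε. -/

import Mathlib

open Finset

noncomputable def expec (n : ℕ) (f : (Fin n → Bool) → ℝ) : ℝ :=
  (∑ x : Fin n → Bool, f x) / 2 ^ n

noncomputable def walsh (n : ℕ) (S : Finset (Fin n)) (x : Fin n → Bool) : ℝ :=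
  ∏ i ∈ S, (if x i then (-1 : ℝ) else 1)

noncomputable def fcoef (n : ℕ) (f : (Fin n → Bool) → ℝ) (S : Finset (Fin n)) : ℝ :=
  expec n (fun x => f x * walsh n S x)

def comp (n : ℕ) (x : Fin n → Bool) : Fin n → Bool := fun i => !(x i)

noncomputable def evenPart (n : ℕ) (f : (Fin n → Bool) → ℝ) (x : Fin n → Bool) : ℝ :=
  (f x + f (comp n x)) / 2

noncomputable def oddPart (n : ℕ) (f : (Fin n → Bool) → ℝ) (x : Fin n → Bool) : ℝ :=
  f x - evenPart n f x

noncomputable def noiseK (n : ℕ) (ε : ℝ) (x y : Fin n → Bool) : ℝ :=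
  ∏ i : Fin n, (if x i = y i then 1 - ε else ε)

noncomputable def noiseOp (n : ℕ) (ε : ℝ) (f : (Fin n → Bool) → ℝ) (x : Fin n → Bool) : ℝ :=
  ∑ y : Fin n → Bool, noiseK n ε x y * f y

noncomputable def entro (n : ℕ) (g : (Fin n → Bool) → ℝ) : ℝ :=
  expec n (fun x => g x * Real.logb 2 (g x)) - expec n g * Real.logb 2 (expec n g)

noncomputable def varia (n : ℕ) (g : (Fin n → Bool) → ℝ) : ℝ :=
  expec n (fun x => g x ^ 2) - (expec n g) ^ 2

noncomputable def jointP (n : ℕ) (ε : ℝ) (f : (Fin n → Bool) → ℝ) (b : Bool)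
    (y : Fin n → Bool) : ℝ :=
  (∑ x : Fin n → Bool, if f x = (if b then (1 : ℝ) else 0) then noiseK n ε x y else 0) / 2 ^ n

noncomputable def margB (n : ℕ) (f : (Fin n → Bool) → ℝ) (b : Bool) : ℝ :=
  (∑ x : Fin n → Bool, if f x = (if b then (1 : ℝ) else 0) then (1 : ℝ) else 0) / 2 ^ n

noncomputable def margY (n : ℕ) (ε : ℝ) (f : (Fin n → Bool) → ℝ) (y : Fin n → Bool) : ℝ :=
  ∑ b : Bool, jointP n ε f b y

/-- Mutual information (in bits) between the bit `f(X)` and the noisy copy `Y`,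
where `X` is uniform on the hypercube and `Y` is obtained by flipping each
coordinate of `X` independently with probability `ε`. Terms with zero joint
probability contribute `0` (since `Real.logb 2 0 = 0`). -/
noncomputable def mutInfo (n : ℕ) (ε : ℝ) (f : (Fin n → Bool) → ℝ) : ℝ :=
  ∑ y : Fin n → Bool, ∑ b : Bool,
    jointP n ε f b y * Real.logb 2 (jointP n ε f b y / (margB n f b * margY n ε f y))

noncomputable def binEnt (x : ℝ) : ℝ := -x * Real.logb 2 x - (1 - x) * Real.logb 2 (1 - x)

/-!
Identify `f` with the sign `F = 2 f - 1`, write `ρ = 1 - 2 ε`, `T` for the noise operator, and let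
`V` and `W` be the variance and the degree-one Fourier weight of `F`. The information is the mean
over `y` of the relative entropy of the sign with bias `T F y` with respect to the sign with bias
`E F`, and `1 - H(ε)` is that of bias `ρ` with respect to a fair coin, which is at least `ρ² / 2`
nats. Since `T` scales degree `k` by `ρ ^ k`, one has `Var (T F) ≤ ρ² W + ρ⁴ (V - W)`.

* If `F` is nearly constant, the level-one inequality makes `W` a small fraction of `V`, and the
  `χ²` bound on relative entropy suffices.
* If `W ≤ (1 - c) V`, a fourth-order expansion of the relative entropy suffices: its main term is
  `Var (T F) / (2 V)`, and hypercontractivity controls the fourth moment.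
* Otherwise nearly all of the variance sits on degree one, so `F` is close to `±χ_i` by the
  Friedgut–Kalai–Naor theorem. Writing `F = χ_i + g` and expanding around `χ_i`, the correlation
  of `T g` with `χ_i` is `-ρ E g² / 2`, and this linear loss beats every error term.
-/

section Expectation

variable {n : ℕ}

lemma sum_cube_succ (g : (Fin (n + 1) → Bool) → ℝ) :
    ∑ x, g x = ∑ y : Fin n → Bool,
      (g (Fin.cons false y : Fin (n + 1) → Bool) + g (Fin.cons true y : Fin (n + 1) → Bool)) := by
  rw [← (Fin.consEquiv (fun _ : Fin (n + 1) => Bool)).sum_comp, Fintype.sum_prod_type_right]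
  refine sum_congr rfl fun y _ => ?_
  rw [Fintype.sum_bool, add_comm]
  rfl

lemma expec_succ (g : (Fin (n + 1) → Bool) → ℝ) :
    expec (n + 1) g = expec n (fun y => (g (Fin.cons false y : Fin (n + 1) → Bool) +
      g (Fin.cons true y : Fin (n + 1) → Bool)) / 2) := by
  simp only [expec, sum_cube_succ, ← sum_div, div_div, pow_succ']

lemma expec_zero (g : (Fin 0 → Bool) → ℝ) (x : Fin 0 → Bool) : expec 0 g = g x := by
  simp only [expec, Fintype.sum_subsingleton g x, pow_zero, div_one]

lemma expec_add (g h : (Fin n → Bool) → ℝ) :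
    expec n (fun x => g x + h x) = expec n g + expec n h := by
  simp only [expec, sum_add_distrib, add_div]

lemma expec_sub (g h : (Fin n → Bool) → ℝ) :
    expec n (fun x => g x - h x) = expec n g - expec n h := by
  simp only [expec, sum_sub_distrib, sub_div]

lemma expec_mul_left (c : ℝ) (g : (Fin n → Bool) → ℝ) :
    expec n (fun x => c * g x) = c * expec n g := by
  simp only [expec, ← mul_sum, mul_div_assoc]

lemma expec_neg (g : (Fin n → Bool) → ℝ) : expec n (fun x => -g x) = -expec n g := by
  simp only [expec, sum_neg_distrib, neg_div]

lemma expec_div (g : (Fin n → Bool) → ℝ) (c : ℝ) :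
    expec n (fun x => g x / c) = expec n g / c := by
  simp only [div_eq_inv_mul, expec_mul_left]

lemma expec_const (c : ℝ) : expec n (fun _ => c) = c := by
  simp [expec]

lemma expec_sum {ι : Type*} (s : Finset ι) (g : ι → (Fin n → Bool) → ℝ) :
    expec n (fun x => ∑ i ∈ s, g i x) = ∑ i ∈ s, expec n (g i) := by
  simp only [expec]
  rw [sum_comm, sum_div]

lemma expec_mono {g h : (Fin n → Bool) → ℝ} (hgh : ∀ x, g x ≤ h x) : expec n g ≤ expec n h :=
  div_le_div_of_nonneg_right (sum_le_sum fun x _ => hgh x) (by positivity)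

lemma expec_nonneg {g : (Fin n → Bool) → ℝ} (hg : ∀ x, 0 ≤ g x) : 0 ≤ expec n g :=
  div_nonneg (sum_nonneg fun x _ => hg x) (by positivity)

lemma expec_mul_sq_le (g h : (Fin n → Bool) → ℝ) :
    expec n (fun x => g x * h x) ^ 2 ≤ expec n (fun x => g x ^ 2) * expec n (fun x => h x ^ 2) := by
  simp only [expec, div_pow, div_mul_div_comm, ← sq]
  exact div_le_div_of_nonneg_right (sum_mul_sq_le_sq_mul_sq _ g h) (by positivity)

lemma sq_expec_le (g : (Fin n → Bool) → ℝ) : expec n g ^ 2 ≤ expec n (fun x => g x ^ 2) := by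
  simpa [expec_const] using expec_mul_sq_le g (fun _ => 1)

lemma varia_nonneg (g : (Fin n → Bool) → ℝ) : 0 ≤ varia n g :=
  sub_nonneg.2 (sq_expec_le g)

lemma expec_sub_expec_sq (g : (Fin n → Bool) → ℝ) :
    expec n (fun x => (g x - expec n g) ^ 2) = varia n g := by
  have expand : (fun x => (g x - expec n g) ^ 2) =
      fun x => g x ^ 2 - 2 * expec n g * g x + expec n g ^ 2 := by
    funext x; ring
  rw [expand, expec_add, expec_sub, expec_mul_left, expec_const, varia]
  ring

end Expectation

section Noise

variable {n : ℕ} {ε : ℝ}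

lemma noiseK_comm (x y : Fin n → Bool) : noiseK n ε x y = noiseK n ε y x := by
  simp only [noiseK, eq_comm]

lemma noiseK_nonneg (hε : (1 - 2 * ε) ^ 2 ≤ 1) (x y : Fin n → Bool) : 0 ≤ noiseK n ε x y := by
  obtain ⟨hl, hu⟩ := abs_le.1 ((sq_le_one_iff_abs_le_one _).1 hε)
  exact prod_nonneg fun i _ => by split_ifs <;> linarith

lemma noiseOp_walsh (S : Finset (Fin n)) (x : Fin n → Bool) :
    noiseOp n ε (walsh n S) x = (1 - 2 * ε) ^ #S * walsh n S x := by
  have walsh_eq (y : Fin n → Bool) :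
      walsh n S y = ∏ i, if i ∈ S then (if y i then (-1 : ℝ) else 1) else 1 := by
    rw [walsh, prod_ite_mem, univ_inter]
  have factor (i : Fin n) :
      ∑ b : Bool, (if x i = b then 1 - ε else ε) * (if i ∈ S then (if b then -1 else 1) else 1) =
        (if i ∈ S then 1 - 2 * ε else 1) * (if i ∈ S then (if x i then -1 else 1) else 1) := by
    cases x i <;> by_cases hi : i ∈ S <;> simp [hi] <;> ring
  calc noiseOp n ε (walsh n S) x
      = ∑ y : Fin n → Bool, ∏ i, (if x i = y i then 1 - ε else ε) *
          (if i ∈ S then (if y i then -1 else 1) else 1) := by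
        simp only [noiseOp, noiseK, walsh_eq, prod_mul_distrib]
    _ = ∏ i, ∑ b : Bool, (if x i = b then 1 - ε else ε) *
          (if i ∈ S then (if b then -1 else 1) else 1) := by
        rw [prod_univ_sum, Fintype.piFinset_univ]
    _ = (1 - 2 * ε) ^ #S * walsh n S x := by
        rw [prod_congr rfl fun i _ => factor i, prod_mul_distrib, ← walsh_eq, prod_ite_mem,
          univ_inter, prod_const]

lemma sum_noiseK (x : Fin n → Bool) : ∑ y, noiseK n ε x y = 1 := by
  simpa [noiseOp, walsh] using noiseOp_walsh (ε := ε) ∅ x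

lemma noiseOp_const (c : ℝ) (x : Fin n → Bool) : noiseOp n ε (fun _ => c) x = c := by
  simp only [noiseOp, ← sum_mul, sum_noiseK, one_mul]

lemma noiseOp_add (g h : (Fin n → Bool) → ℝ) (x : Fin n → Bool) :
    noiseOp n ε (fun y => g y + h y) x = noiseOp n ε g x + noiseOp n ε h x := by
  simp only [noiseOp, mul_add, sum_add_distrib]

lemma noiseOp_sub (g h : (Fin n → Bool) → ℝ) (x : Fin n → Bool) :
    noiseOp n ε (fun y => g y - h y) x = noiseOp n ε g x - noiseOp n ε h x := by
  simp only [noiseOp, mul_sub, sum_sub_distrib]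

lemma noiseOp_mul_left (c : ℝ) (g : (Fin n → Bool) → ℝ) (x : Fin n → Bool) :
    noiseOp n ε (fun y => c * g y) x = c * noiseOp n ε g x := by
  simp only [noiseOp, mul_sum, mul_left_comm c]

lemma noiseOp_mono (hε : (1 - 2 * ε) ^ 2 ≤ 1) {g h : (Fin n → Bool) → ℝ}
    (hgh : ∀ x, g x ≤ h x) (x : Fin n → Bool) : noiseOp n ε g x ≤ noiseOp n ε h x :=
  sum_le_sum fun y _ => mul_le_mul_of_nonneg_left (hgh y) (noiseK_nonneg hε x y)

lemma expec_noiseOp_mul (g h : (Fin n → Bool) → ℝ) :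
    expec n (fun x => noiseOp n ε g x * h x) = expec n (fun x => g x * noiseOp n ε h x) := by
  simp only [expec, noiseOp, sum_mul, mul_sum]
  rw [sum_comm]
  congr 1
  refine sum_congr rfl fun y _ => sum_congr rfl fun x _ => ?_
  rw [noiseK_comm]
  ring

lemma expec_noiseOp (g : (Fin n → Bool) → ℝ) : expec n (noiseOp n ε g) = expec n g := by
  simpa [noiseOp_const] using expec_noiseOp_mul (ε := ε) g fun _ => 1

lemma noiseOp_zero (g : (Fin 0 → Bool) → ℝ) (x : Fin 0 → Bool) : noiseOp 0 ε g x = g x := by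
  simp only [noiseOp, noiseK, univ_eq_empty, prod_empty, one_mul, Fintype.sum_subsingleton g x]

end Noise

section FirstCoordinate

variable {n : ℕ} {ε : ℝ}

/-- The even part of `g` in the first coordinate, as a function of the remaining ones: together
with `headOdd` it gives the decomposition `g x = headEven g (tail x) ± headOdd g (tail x)` on which
the inductions over the dimension rest. -/
noncomputable def headEven (g : (Fin (n + 1) → Bool) → ℝ) (y : Fin n → Bool) : ℝ :=
  (g (Fin.cons false y : Fin (n + 1) → Bool) + g (Fin.cons true y : Fin (n + 1) → Bool)) / 2

/-- The odd part of `g` in the first coordinate, as a function of the remaining ones. -/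
noncomputable def headOdd (g : (Fin (n + 1) → Bool) → ℝ) (y : Fin n → Bool) : ℝ :=
  (g (Fin.cons false y : Fin (n + 1) → Bool) - g (Fin.cons true y : Fin (n + 1) → Bool)) / 2

lemma expec_headEven (g : (Fin (n + 1) → Bool) → ℝ) : expec n (headEven g) = expec (n + 1) g :=
  (expec_succ g).symm

lemma varia_succ (g : (Fin (n + 1) → Bool) → ℝ) :
    varia (n + 1) g = varia n (headEven g) + expec n (fun y => headOdd g y ^ 2) := by
  simp only [varia, expec_headEven]
  rw [expec_succ, sub_add_eq_add_sub, ← expec_add]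
  congr 2
  funext y
  simp only [headEven, headOdd]
  ring

lemma expec_pow_four_succ (g : (Fin (n + 1) → Bool) → ℝ) :
    expec (n + 1) (fun x => g x ^ 4) = expec n (fun y => headEven g y ^ 4) +
      6 * expec n (fun y => headEven g y ^ 2 * headOdd g y ^ 2) +
        expec n (fun y => headOdd g y ^ 4) := by
  rw [expec_succ, ← expec_mul_left, ← expec_add, ← expec_add]
  congr 1
  funext y
  simp only [headEven, headOdd]
  ring

lemma noiseK_cons (a b : Bool) (x y : Fin n → Bool) :
    noiseK (n + 1) ε (Fin.cons a x) (Fin.cons b y) =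
      (if a = b then 1 - ε else ε) * noiseK n ε x y := by
  simp [noiseK, Fin.prod_univ_succ]

lemma headEven_noiseOp (g : (Fin (n + 1) → Bool) → ℝ) :
    headEven (noiseOp (n + 1) ε g) = noiseOp n ε (headEven g) := by
  funext y
  simp only [headEven, noiseOp, sum_cube_succ, noiseK_cons, ← sum_add_distrib, sum_div]
  refine sum_congr rfl fun z _ => ?_
  simp only [reduceIte, Bool.false_eq_true, Bool.true_eq_false]
  ring

lemma headOdd_noiseOp (g : (Fin (n + 1) → Bool) → ℝ) (y : Fin n → Bool) :
    headOdd (noiseOp (n + 1) ε g) y = (1 - 2 * ε) * noiseOp n ε (headOdd g) y := by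
  simp only [headOdd, noiseOp, sum_cube_succ, noiseK_cons, ← sum_sub_distrib, sum_div, mul_sum]
  refine sum_congr rfl fun z _ => ?_
  simp only [reduceIte, Bool.false_eq_true, Bool.true_eq_false]
  ring

lemma varia_noiseOp_succ (g : (Fin (n + 1) → Bool) → ℝ) :
    varia (n + 1) (noiseOp (n + 1) ε g) = varia n (noiseOp n ε (headEven g)) +
      (1 - 2 * ε) ^ 2 * expec n (fun y => noiseOp n ε (headOdd g) y ^ 2) := by
  simp only [varia_succ, headEven_noiseOp, headOdd_noiseOp, mul_pow, expec_mul_left]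

end FirstCoordinate

section Moments

variable {n : ℕ} {ε : ℝ}

lemma expec_noiseOp_sq_le (hε : (1 - 2 * ε) ^ 2 ≤ 1) (g : (Fin n → Bool) → ℝ) :
    expec n (fun x => noiseOp n ε g x ^ 2) ≤ expec n (fun x => g x ^ 2) := by
  have jensen (x : Fin n → Bool) : noiseOp n ε g x ^ 2 ≤ noiseOp n ε (fun y => g y ^ 2) x := by
    have tangent := noiseOp_mono hε (g := fun y => 2 * noiseOp n ε g x * g y - noiseOp n ε g x ^ 2)
      (h := fun y => g y ^ 2) (fun y => by linarith [sq_nonneg (g y - noiseOp n ε g x)]) x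
    rw [noiseOp_sub, noiseOp_mul_left, noiseOp_const] at tangent
    linarith
  exact (expec_mono jensen).trans_eq (expec_noiseOp _)

lemma varia_noiseOp_le (hε : (1 - 2 * ε) ^ 2 ≤ 1) (g : (Fin n → Bool) → ℝ) :
    varia n (noiseOp n ε g) ≤ (1 - 2 * ε) ^ 2 * varia n g := by
  induction n with
  | zero => simp [varia, expec_zero _ default, noiseOp_zero]
  | succ n ih =>
    have contraction := mul_le_mul_of_nonneg_left (expec_noiseOp_sq_le hε (headOdd g))
      (sq_nonneg (1 - 2 * ε))
    rw [varia_noiseOp_succ, varia_succ, mul_add]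
    exact add_le_add (ih _) contraction

/-- The Fourier weight of `g` on the characters of degree one. -/
noncomputable def levelOne (n : ℕ) (g : (Fin n → Bool) → ℝ) : ℝ :=
  ∑ i, fcoef n g {i} ^ 2

lemma walsh_singleton (i : Fin n) (x : Fin n → Bool) :
    walsh n {i} x = if x i then -1 else 1 :=
  prod_singleton _ _

lemma walsh_singleton_sq (i : Fin n) (x : Fin n → Bool) : walsh n {i} x ^ 2 = 1 := by
  rw [walsh_singleton]
  split_ifs <;> norm_num

lemma fcoef_singleton_zero (g : (Fin (n + 1) → Bool) → ℝ) :
    fcoef (n + 1) g {0} = expec n (headOdd g) := by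
  rw [fcoef, expec_succ]
  congr 1
  funext y
  simp [walsh_singleton, headOdd, sub_eq_add_neg]

lemma fcoef_singleton_succ (g : (Fin (n + 1) → Bool) → ℝ) (i : Fin n) :
    fcoef (n + 1) g {i.succ} = fcoef n (headEven g) {i} := by
  rw [fcoef, fcoef, expec_succ]
  congr 1
  funext y
  simp only [walsh_singleton, headEven, Fin.cons_succ]
  ring

lemma levelOne_succ (g : (Fin (n + 1) → Bool) → ℝ) :
    levelOne (n + 1) g = expec n (headOdd g) ^ 2 + levelOne n (headEven g) := by
  simp only [levelOne, Fin.sum_univ_succ, fcoef_singleton_zero, fcoef_singleton_succ]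

lemma levelOne_nonneg (g : (Fin n → Bool) → ℝ) : 0 ≤ levelOne n g :=
  sum_nonneg fun _ _ => sq_nonneg _

lemma varia_noiseOp_le_levelOne (hε : (1 - 2 * ε) ^ 2 ≤ 1) (g : (Fin n → Bool) → ℝ) :
    varia n (noiseOp n ε g) ≤
      (1 - 2 * ε) ^ 2 * levelOne n g + (1 - 2 * ε) ^ 4 * (varia n g - levelOne n g) := by
  induction n with
  | zero => simp [varia, expec_zero _ default, noiseOp_zero, levelOne]
  | succ n ih =>
    have odd := mul_le_mul_of_nonneg_left (varia_noiseOp_le hε (headOdd g))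
      (sq_nonneg (1 - 2 * ε))
    rw [varia, varia, expec_noiseOp] at odd
    rw [varia_noiseOp_succ, varia_succ, levelOne_succ]
    linear_combination ih (headEven g) + odd

lemma expec_sq_mul_sq_le {g h : (Fin n → Bool) → ℝ} {P Q : ℝ} (hP : 0 ≤ P) (hQ : 0 ≤ Q)
    (hg : expec n (fun x => g x ^ 4) ≤ P ^ 2) (hh : expec n (fun x => h x ^ 4) ≤ Q ^ 2) :
    expec n (fun x => g x ^ 2 * h x ^ 2) ≤ P * Q := by
  refine abs_le_of_sq_le_sq' ?_ (mul_nonneg hP hQ) |>.2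
  calc expec n (fun x => g x ^ 2 * h x ^ 2) ^ 2
      ≤ expec n (fun x => g x ^ 4) * expec n (fun x => h x ^ 4) := by
        refine (expec_mul_sq_le _ _).trans_eq ?_
        simp only [← pow_mul, Nat.reduceMul]
    _ ≤ P ^ 2 * Q ^ 2 := mul_le_mul hg hh (expec_nonneg fun _ => by positivity) (sq_nonneg P)
    _ = (P * Q) ^ 2 := (mul_pow P Q 2).symm

/-- The `(2, 4)` hypercontractive inequality, in view of `T_ρ = T_{1/√3} T_{√3 ρ}`. -/
lemma expec_noiseOp_pow_four_le_sq {ε' : ℝ} (hε : (1 - 2 * ε') ^ 2 = 3 * (1 - 2 * ε) ^ 2)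
    (g : (Fin n → Bool) → ℝ) :
    expec n (fun x => noiseOp n ε g x ^ 4) ≤ expec n (fun x => noiseOp n ε' g x ^ 2) ^ 2 := by
  induction n with
  | zero => simp [expec_zero _ default, noiseOp_zero, ← pow_mul]
  | succ n ih =>
    have second_moment : expec (n + 1) (fun x => noiseOp (n + 1) ε' g x ^ 2) =
        expec n (fun y => noiseOp n ε' (headEven g) y ^ 2) +
          3 * (1 - 2 * ε) ^ 2 * expec n (fun y => noiseOp n ε' (headOdd g) y ^ 2) := by
      have h := varia_noiseOp_succ (ε := ε') g
      simp only [varia, expec_noiseOp, expec_headEven, hε] at h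
      linarith
    simp only [expec_pow_four_succ, headEven_noiseOp, headOdd_noiseOp, second_moment, mul_pow,
      mul_left_comm _ ((1 - 2 * ε) ^ 2), expec_mul_left]
    set A := noiseOp n ε (headEven g)
    set B := noiseOp n ε (headOdd g)
    set P := expec n (fun y => noiseOp n ε' (headEven g) y ^ 2)
    set Q := expec n (fun y => noiseOp n ε' (headOdd g) y ^ 2)
    have hP : 0 ≤ P := expec_nonneg fun _ => sq_nonneg _
    have hQ : 0 ≤ Q := expec_nonneg fun _ => sq_nonneg _
    have even : expec n (fun y => A y ^ 4) ≤ P ^ 2 := ih _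
    have odd : expec n (fun y => B y ^ 4) ≤ Q ^ 2 := ih _
    have mixed : expec n (fun y => A y ^ 2 * B y ^ 2) ≤ P * Q := expec_sq_mul_sq_le hP hQ even odd
    calc expec n (fun y => A y ^ 4) + (1 - 2 * ε) ^ 2 * (6 * expec n (fun y => A y ^ 2 * B y ^ 2)) +
          (1 - 2 * ε) ^ 4 * expec n (fun y => B y ^ 4)
        ≤ P ^ 2 + (1 - 2 * ε) ^ 2 * (6 * (P * Q)) + (1 - 2 * ε) ^ 4 * Q ^ 2 := by gcongr
      _ ≤ (P + 3 * (1 - 2 * ε) ^ 2 * Q) ^ 2 := by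
          linear_combination 8 * sq_nonneg ((1 - 2 * ε) ^ 2 * Q)

lemma expec_noiseOp_sub_expec_pow_four_le (hε : 3 * (1 - 2 * ε) ^ 2 ≤ 1)
    (g : (Fin n → Bool) → ℝ) :
    expec n (fun x => (noiseOp n ε g x - expec n g) ^ 4) ≤
      (3 * (1 - 2 * ε) ^ 2 * varia n g) ^ 2 := by
  set ε' := (1 - √(3 * (1 - 2 * ε) ^ 2)) / 2
  have hε' : (1 - 2 * ε') ^ 2 = 3 * (1 - 2 * ε) ^ 2 := by
    rw [show 1 - 2 * ε' = √(3 * (1 - 2 * ε) ^ 2) by ring, Real.sq_sqrt (by positivity)]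
  have centered (ε : ℝ) (x : Fin n → Bool) :
      noiseOp n ε g x - expec n g = noiseOp n ε (fun y => g y - expec n g) x := by
    rw [noiseOp_sub, noiseOp_const]
  simp only [centered]
  refine (expec_noiseOp_pow_four_le_sq hε' _).trans ?_
  simp only [← centered]
  rw [← expec_noiseOp (ε := ε') g, expec_sub_expec_sq, ← hε']
  exact pow_le_pow_left₀ (varia_nonneg _) (varia_noiseOp_le (hε'.trans_le hε) g) 2

end Moments

section LinearForms

variable {n : ℕ}

/-- The linear form with coefficients `b` in the characters of degree one. -/
noncomputable def linForm (b : Fin n → ℝ) (x : Fin n → Bool) : ℝ := ∑ i, b i * walsh n {i} x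

lemma linForm_cons (b : Fin (n + 1) → ℝ) (c : Bool) (y : Fin n → Bool) :
    linForm b (Fin.cons c y : Fin (n + 1) → Bool) =
      b 0 * (if c then -1 else 1) + linForm (fun i => b i.succ) y := by
  simp only [linForm, Fin.sum_univ_succ, walsh_singleton, Fin.cons_zero, Fin.cons_succ]

lemma expec_comp_add_linForm_succ (φ : ℝ → ℝ) (a : ℝ) (b : Fin (n + 1) → ℝ) :
    expec (n + 1) (fun x => φ (a + linForm b x)) =
      (expec n (fun y => φ (a + b 0 + linForm (fun i => b i.succ) y)) +
        expec n (fun y => φ (a - b 0 + linForm (fun i => b i.succ) y))) / 2 := by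
  rw [expec_succ, expec_div, expec_add]
  simp only [linForm_cons, ← add_assoc, reduceIte, Bool.false_eq_true, mul_neg, mul_one,
    ← sub_eq_add_neg]

lemma expec_add_linForm_sq (a : ℝ) (b : Fin n → ℝ) :
    expec n (fun x => (a + linForm b x) ^ 2) = a ^ 2 + ∑ i, b i ^ 2 := by
  induction n generalizing a with
  | zero => simp [expec_zero _ default, linForm]
  | succ n ih =>
    rw [expec_comp_add_linForm_succ (· ^ 2), ih, ih, Fin.sum_univ_succ]
    ring

lemma expec_add_linForm_pow_four (a : ℝ) (b : Fin n → ℝ) :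
    expec n (fun x => (a + linForm b x) ^ 4) =
      a ^ 4 + 6 * a ^ 2 * ∑ i, b i ^ 2 + 3 * (∑ i, b i ^ 2) ^ 2 - 2 * ∑ i, b i ^ 4 := by
  induction n generalizing a with
  | zero => simp [expec_zero _ default, linForm]
  | succ n ih =>
    rw [expec_comp_add_linForm_succ (· ^ 4), ih, ih, Fin.sum_univ_succ, Fin.sum_univ_succ]
    ring

lemma expec_add_linForm_pow_four_le (a : ℝ) (b : Fin n → ℝ) :
    expec n (fun x => (a + linForm b x) ^ 4) ≤ 3 * (a ^ 2 + ∑ i, b i ^ 2) ^ 2 := by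
  have hb : 0 ≤ ∑ i, b i ^ 4 := sum_nonneg fun _ _ => by positivity
  linear_combination expec_add_linForm_pow_four a b + 2 * hb + 2 * sq_nonneg (a ^ 2)

lemma expec_add_linForm_pow_six_le (a : ℝ) (b : Fin n → ℝ) :
    expec n (fun x => (a + linForm b x) ^ 6) ≤ 15 * (a ^ 2 + ∑ i, b i ^ 2) ^ 3 := by
  have expansion : expec n (fun x => (a + linForm b x) ^ 6) ≤
      a ^ 6 + 15 * a ^ 4 * ∑ i, b i ^ 2 + 45 * a ^ 2 * (∑ i, b i ^ 2) ^ 2 +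
        15 * (∑ i, b i ^ 2) ^ 3 := by
    induction n generalizing a with
    | zero => simp [expec_zero _ default, linForm]
    | succ n ih =>
      rw [expec_comp_add_linForm_succ (· ^ 6), Fin.sum_univ_succ]
      have plus := ih (a + b 0) (fun i => b i.succ)
      have minus := ih (a - b 0) (fun i => b i.succ)
      have hW : 0 ≤ ∑ i : Fin n, b i.succ ^ 2 := sum_nonneg fun _ _ => sq_nonneg _
      set W := ∑ i : Fin n, b i.succ ^ 2
      have h₁ : 0 ≤ a ^ 2 * b 0 ^ 4 := by positivity
      have h₂ : 0 ≤ W * b 0 ^ 4 := by positivity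
      have h₃ : 0 ≤ b 0 ^ 6 := by positivity
      linear_combination (plus + minus) / 2 + 30 * h₁ + 30 * h₂ + 14 * h₃
  have hS : 0 ≤ ∑ i, b i ^ 2 := sum_nonneg fun _ _ => sq_nonneg _
  have h₁ : 0 ≤ a ^ 6 := by positivity
  have h₂ : 0 ≤ a ^ 4 * ∑ i, b i ^ 2 := by positivity
  linear_combination expansion + 14 * h₁ + 30 * h₂

lemma expec_mul_linForm (g : (Fin n → Bool) → ℝ) (b : Fin n → ℝ) :
    expec n (fun x => g x * linForm b x) = ∑ i, b i * fcoef n g {i} := by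
  simp only [linForm, mul_sum, fcoef, ← expec_mul_left]
  rw [expec_sum]
  simp only [mul_left_comm]

end LinearForms

section SignFunctions

variable {n : ℕ}

lemma expec_walsh_of_nonempty {S : Finset (Fin n)} (hS : S.Nonempty) : expec n (walsh n S) = 0 := by
  have eigen : noiseOp n (1 / 2) (walsh n S) = fun _ => 0 := by
    funext x
    rw [noiseOp_walsh]
    simp [hS.ne_empty]
  rw [← expec_noiseOp (ε := 1 / 2), eigen, expec_const]

lemma fcoef_sub (g h : (Fin n → Bool) → ℝ) (S : Finset (Fin n)) :
    fcoef n (fun x => g x - h x) S = fcoef n g S - fcoef n h S := by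
  simp only [fcoef, sub_mul, expec_sub]

lemma levelOne_sub_const (g : (Fin n → Bool) → ℝ) (c : ℝ) :
    levelOne n (fun x => g x - c) = levelOne n g := by
  have fcoef_const (i : Fin n) : fcoef n (fun _ => c) {i} = 0 := by
    rw [fcoef, expec_mul_left, expec_walsh_of_nonempty (singleton_nonempty i), mul_zero]
  simp only [levelOne, fcoef_sub, fcoef_const, sub_zero]

lemma expec_mul_pow_four_le {g : (Fin n → Bool) → ℝ} {c : ℝ} (hg : ∀ x, g x ^ 3 = c ^ 2 * g x)
    (h : (Fin n → Bool) → ℝ) :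
    c ^ 2 * expec n (fun x => g x * h x) ^ 4 ≤
      expec n (fun x => g x ^ 2) ^ 3 * expec n (fun x => h x ^ 4) := by
  set p := expec n (fun x => g x ^ 2)
  set R := expec n (fun x => g x ^ 2 * h x ^ 2)
  have hp : 0 ≤ p := expec_nonneg fun _ => sq_nonneg _
  have hh : 0 ≤ expec n (fun x => h x ^ 4) := expec_nonneg fun _ => by positivity
  rcases eq_or_ne c 0 with rfl | hc
  · simpa using mul_nonneg (pow_nonneg hp 3) hh
  have hc2 : 0 < c ^ 2 := by positivity
  have first : c ^ 2 * expec n (fun x => g x * h x) ^ 2 ≤ p * R := by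
    have cs := expec_mul_sq_le g (fun x => g x ^ 2 * h x)
    have h₁ : (fun x => g x * (g x ^ 2 * h x)) = fun x => c ^ 2 * (g x * h x) := by
      funext x; linear_combination h x * hg x
    have h₂ : (fun x => (g x ^ 2 * h x) ^ 2) = fun x => c ^ 2 * (g x ^ 2 * h x ^ 2) := by
      funext x; linear_combination g x * h x ^ 2 * hg x
    rw [h₁, h₂, expec_mul_left, expec_mul_left] at cs
    refine le_of_mul_le_mul_left ?_ hc2
    linear_combination cs
  have second : R ^ 2 ≤ c ^ 2 * p * expec n (fun x => h x ^ 4) := by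
    have cs := expec_mul_sq_le (fun x => g x ^ 2) (fun x => h x ^ 2)
    have h₁ : (fun x => (g x ^ 2) ^ 2) = fun x => c ^ 2 * g x ^ 2 := by
      funext x; linear_combination g x * hg x
    rw [h₁, expec_mul_left] at cs
    simpa only [← pow_mul] using cs
  refine le_of_mul_le_mul_left ?_ hc2
  calc c ^ 2 * (c ^ 2 * expec n (fun x => g x * h x) ^ 4)
      = (c ^ 2 * expec n (fun x => g x * h x) ^ 2) ^ 2 := by ring
    _ ≤ (p * R) ^ 2 := pow_le_pow_left₀ (by positivity) first 2
    _ = p ^ 2 * R ^ 2 := mul_pow p R 2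
    _ ≤ p ^ 2 * (c ^ 2 * p * expec n (fun x => h x ^ 4)) := by gcongr
    _ = c ^ 2 * (p ^ 3 * expec n (fun x => h x ^ 4)) := by ring

lemma levelOne_sq_le {g : (Fin n → Bool) → ℝ} {c : ℝ} (hg : ∀ x, g x ^ 3 = c ^ 2 * g x) :
    c ^ 2 * levelOne n g ^ 2 ≤ 3 * expec n (fun x => g x ^ 2) ^ 3 := by
  set b : Fin n → ℝ := fun i => fcoef n g {i}
  have hp : 0 ≤ expec n (fun x => g x ^ 2) := expec_nonneg fun _ => sq_nonneg _
  have correlation : expec n (fun x => g x * linForm b x) = levelOne n g := by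
    simp only [expec_mul_linForm, levelOne, b, sq]
  have fourth_moment : expec n (fun x => linForm b x ^ 4) ≤ 3 * levelOne n g ^ 2 := by
    simpa [b, levelOne] using expec_add_linForm_pow_four_le 0 b
  rcases (levelOne_nonneg g).eq_or_lt with hW | hW
  · rw [← hW]
    simpa using pow_nonneg hp 3
  refine le_of_mul_le_mul_right ?_ (pow_pos hW 2)
  calc c ^ 2 * levelOne n g ^ 2 * levelOne n g ^ 2
      = c ^ 2 * expec n (fun x => g x * linForm b x) ^ 4 := by rw [correlation]; ring
    _ ≤ expec n (fun x => g x ^ 2) ^ 3 * (3 * levelOne n g ^ 2) :=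
        (expec_mul_pow_four_le hg _).trans (by gcongr)
    _ = 3 * expec n (fun x => g x ^ 2) ^ 3 * levelOne n g ^ 2 := by ring

variable {F G : (Fin n → Bool) → ℝ} (hF : ∀ x, F x ^ 2 = 1) (hG : ∀ x, G x ^ 2 = 1)

include hF

lemma varia_eq_one_sub_sq : varia n F = 1 - expec n F ^ 2 := by
  simp only [varia, hF, expec_const]

lemma expec_mem_Icc : expec n F ∈ Set.Icc (-1) 1 :=
  abs_le.1 ((sq_le_one_iff_abs_le_one _).1 (by linarith [varia_nonneg F, varia_eq_one_sub_sq hF]))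

include hG in
lemma expec_sub_sq :
    expec n (fun x => (F x - G x) ^ 2) = 2 * (1 - expec n (fun x => F x * G x)) := by
  rw [← expec_const (n := n) 1, ← expec_sub, ← expec_mul_left]
  congr 1
  funext x
  linear_combination hF x + hG x

include hG in
lemma levelOne_sub_sq_le :
    levelOne n (fun x => F x - G x) ^ 2 ≤ 6 * (1 - expec n (fun x => F x * G x)) ^ 3 := by
  have cube (x : Fin n → Bool) : (F x - G x) ^ 3 = 2 ^ 2 * (F x - G x) := by
    linear_combination (F x - 3 * G x) * hF x + (3 * F x - G x) * hG x
  have h := levelOne_sq_le cube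
  rw [expec_sub_sq hF hG] at h
  linear_combination h / 4

include hG in
lemma abs_expec_sub_expec_le : |expec n F - expec n G| ≤ 1 - expec n (fun x => F x * G x) := by
  have pointwise (x : Fin n → Bool) : |F x - G x| ≤ 1 - F x * G x := by
    rcases sq_eq_one_iff.1 (hF x) with hx | hx <;>
      rcases sq_eq_one_iff.1 (hG x) with hy | hy <;> norm_num [hx, hy]
  rw [← expec_const (n := n) 1, ← expec_sub, ← expec_sub, abs_le, ← expec_neg]
  exact ⟨expec_mono fun x => (abs_le.1 (pointwise x)).1,
    expec_mono fun x => (abs_le.1 (pointwise x)).2⟩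

lemma levelOne_sq_le_varia_pow_three : levelOne n F ^ 2 ≤ 6 * varia n F ^ 3 := by
  have towards_one : levelOne n F ^ 2 ≤ 6 * (1 - expec n F) ^ 3 := by
    simpa only [levelOne_sub_const, mul_one] using
      levelOne_sub_sq_le hF (G := fun _ => 1) fun _ => one_pow 2
  have towards_neg_one : levelOne n F ^ 2 ≤ 6 * (1 + expec n F) ^ 3 := by
    have h := levelOne_sub_sq_le hF (G := fun _ => -1) fun _ => neg_one_sq
    rw [levelOne_sub_const] at h
    simpa only [mul_neg, mul_one, expec_neg, sub_neg_eq_add] using h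
  obtain ⟨hl, hu⟩ := expec_mem_Icc hF
  rw [varia_eq_one_sub_sq hF]
  rcases le_total 0 (expec n F) with ha | ha
  · refine towards_one.trans ?_
    gcongr
    nlinarith
  · refine towards_neg_one.trans ?_
    gcongr
    · linarith
    · nlinarith

end SignFunctions

section AffinePart

variable {n : ℕ}

/-- The Fourier part of `g` of degree at most one, its best approximation in `L²` by an affine
function. -/
noncomputable def affinePart (g : (Fin n → Bool) → ℝ) (x : Fin n → Bool) : ℝ :=
  expec n g + linForm (fun i => fcoef n g {i}) x

lemma expec_affinePart_sq (g : (Fin n → Bool) → ℝ) :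
    expec n (fun x => affinePart g x ^ 2) = expec n g ^ 2 + levelOne n g :=
  expec_add_linForm_sq _ _

lemma expec_mul_affinePart (g : (Fin n → Bool) → ℝ) :
    expec n (fun x => g x * affinePart g x) = expec n g ^ 2 + levelOne n g := by
  simp only [affinePart, mul_add, expec_add, expec_mul_linForm, mul_comm _ (expec n g),
    expec_mul_left, levelOne, sq]

lemma expec_sub_affinePart_sq (g : (Fin n → Bool) → ℝ) :
    expec n (fun x => (g x - affinePart g x) ^ 2) = varia n g - levelOne n g := by
  have expand : (fun x => (g x - affinePart g x) ^ 2) =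
      fun x => g x ^ 2 - 2 * (g x * affinePart g x) + affinePart g x ^ 2 := by
    funext x; ring
  rw [expand, expec_add, expec_sub, expec_mul_left, expec_mul_affinePart, expec_affinePart_sq,
    varia]
  ring

lemma levelOne_le_varia (g : (Fin n → Bool) → ℝ) : levelOne n g ≤ varia n g :=
  sub_nonneg.1 ((expec_nonneg fun _ => sq_nonneg _).trans_eq (expec_sub_affinePart_sq g))

lemma exists_sum_pow_four_le {ι : Type*} [Fintype ι] [Nonempty ι] (b : ι → ℝ) :
    ∃ i, ∑ j, b j ^ 4 ≤ b i ^ 2 * ∑ j, b j ^ 2 := by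
  obtain ⟨i, hi⟩ := Finite.exists_max fun i => b i ^ 2
  refine ⟨i, ?_⟩
  rw [mul_sum]
  refine sum_le_sum fun j _ => ?_
  nlinarith [hi j, sq_nonneg (b j)]

variable {F : (Fin n → Bool) → ℝ} (hF : ∀ x, F x ^ 2 = 1)

include hF

/-- `ℓ⁴ - ℓ² = (ℓ - F) ℓ² (ℓ + F)`, and the first factor is small in `L²`. -/
lemma sq_expec_affinePart_pow_four_sub_le :
    (expec n (fun x => affinePart F x ^ 4) - expec n (fun x => affinePart F x ^ 2)) ^ 2 ≤
      36 * (varia n F - levelOne n F) := by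
  set s := expec n F ^ 2 + levelOne n F
  have hs₀ : 0 ≤ s := add_nonneg (sq_nonneg _) (levelOne_nonneg F)
  have hs₁ : s ≤ 1 := by
    linarith [levelOne_le_varia F, varia_eq_one_sub_sq hF]
  have cofactor : expec n (fun x => (affinePart F x ^ 2 * (affinePart F x + F x)) ^ 2) ≤ 36 := by
    calc expec n (fun x => (affinePart F x ^ 2 * (affinePart F x + F x)) ^ 2)
        ≤ expec n (fun x => 2 * affinePart F x ^ 6 + 2 * affinePart F x ^ 4) :=
          expec_mono fun x => by
            linear_combination 2 * affinePart F x ^ 4 * hF x +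
              sq_nonneg (affinePart F x ^ 2 * (affinePart F x - F x))
      _ ≤ 2 * (15 * s ^ 3) + 2 * (3 * s ^ 2) := by
          rw [expec_add, expec_mul_left, expec_mul_left]
          gcongr
          · exact expec_add_linForm_pow_six_le _ _
          · exact expec_add_linForm_pow_four_le _ _
      _ ≤ 36 := by linarith [pow_le_one₀ hs₀ hs₁ (n := 3), pow_le_one₀ hs₀ hs₁ (n := 2)]
  have factor : (fun x => affinePart F x ^ 4 - affinePart F x ^ 2) =
      fun x => -((F x - affinePart F x) * (affinePart F x ^ 2 * (affinePart F x + F x))) := by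
    funext x
    linear_combination affinePart F x ^ 2 * hF x
  rw [← expec_sub, factor, expec_neg, neg_sq, mul_comm (36 : ℝ), ← expec_sub_affinePart_sq]
  exact (expec_mul_sq_le _ _).trans
    (mul_le_mul_of_nonneg_left cofactor (expec_nonneg fun _ => sq_nonneg _))

/-- The fourth moment of the affine part is `s² + 4 a² W + 2 (W² - ∑ bᵢ⁴)` with `s = a² + W`. As it
is nearly `s`, which is nearly `1`, the sum `∑ bᵢ⁴` cannot be much smaller than `W²`. -/
lemma exists_fcoef_singleton_sq_ge (hW : 0 < levelOne n F) :
    ∃ i, 1 - (varia n F - levelOne n F) - 7 * √(varia n F - levelOne n F) / (2 * levelOne n F) ≤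
      fcoef n F {i} ^ 2 := by
  set a := expec n F
  set W := levelOne n F with hW_def
  set η := varia n F - W
  set b : Fin n → ℝ := fun i => fcoef n F {i}
  have hη : 0 ≤ η := sub_nonneg.2 (levelOne_le_varia F)
  have ha : a ^ 2 + W = 1 - η := by linarith [varia_eq_one_sub_sq hF]
  have hη₁ : η ≤ 1 := by nlinarith
  have : Nonempty (Fin n) := by
    by_contra h
    rw [not_nonempty_iff] at h
    simp [hW_def, levelOne] at hW
  obtain ⟨i, hi⟩ := exists_sum_pow_four_le b
  refine ⟨i, ?_⟩
  have fourth_moment : expec n (fun x => affinePart F x ^ 4) =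
      a ^ 4 + 6 * a ^ 2 * W + 3 * W ^ 2 - 2 * ∑ i, b i ^ 4 := expec_add_linForm_pow_four _ _
  have deviation : expec n (fun x => affinePart F x ^ 4) - (a ^ 2 + W) ≤ 6 * √η := by
    rw [← expec_affinePart_sq]
    refine (abs_le_of_sq_le_sq' ?_ (by positivity)).2
    rw [mul_pow, Real.sq_sqrt hη]
    linarith [sq_expec_affinePart_pow_four_sub_le hF]
  have hη_le_sqrt : (a ^ 2 + W) * η ≤ √η :=
    (mul_le_of_le_one_left hη (by linarith)).trans (Real.le_sqrt_of_sq_le (by nlinarith))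
  have hb : ∑ j, b j ^ 4 ≤ b i ^ 2 * W := hi
  rw [fourth_moment] at deviation
  rw [sub_le_comm, le_div_iff₀ (by positivity)]
  linear_combination deviation + hη_le_sqrt + 2 * hb + 2 * mul_nonneg (sq_nonneg a) hW.le -
    (a ^ 2 + 3 * W) * ha

end AffinePart

section RelativeEntropy

open InformationTheory

lemma nonneg_of_hasDerivAt_of_mul_nonneg {s : Set ℝ} (hs : s.OrdConnected) (h₀ : 0 ∈ s)
    {f f' : ℝ → ℝ} (hf₀ : f 0 = 0) (hf : ∀ x ∈ s, HasDerivAt f (f' x) x)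
    (hf' : ∀ x ∈ s, 0 ≤ x * f' x) {x : ℝ} (hx : x ∈ s) : 0 ≤ f x := by
  have cont {t : Set ℝ} (ht : t ⊆ s) : ContinuousOn f t :=
    fun y hy => (hf y (ht hy)).continuousAt.continuousWithinAt
  rcases le_total 0 x with h | h
  · have hsub : Set.Icc 0 x ⊆ s := hs.out h₀ hx
    rw [← hf₀]
    refine monotoneOn_of_hasDerivWithinAt_nonneg (convex_Icc 0 x) (cont hsub)
      (fun y hy => (hf y (hsub (interior_subset hy))).hasDerivWithinAt) (fun y hy => ?_)
      (Set.left_mem_Icc.2 h) (Set.right_mem_Icc.2 h) h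
    rw [interior_Icc] at hy
    exact nonneg_of_mul_nonneg_right (hf' y (hsub (Set.Ioo_subset_Icc_self hy))) hy.1
  · have hsub : Set.Icc x 0 ⊆ s := hs.out hx h₀
    rw [← hf₀]
    refine antitoneOn_of_hasDerivWithinAt_nonpos (convex_Icc x 0) (cont hsub)
      (fun y hy => (hf y (hsub (interior_subset hy))).hasDerivWithinAt) (fun y hy => ?_)
      (Set.left_mem_Icc.2 h) (Set.right_mem_Icc.2 h) h
    rw [interior_Icc] at hy
    exact nonpos_of_mul_nonneg_right (hf' y (hsub (Set.Ioo_subset_Icc_self hy))) hy.2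

lemma log_one_add_le_cubic {v : ℝ} (hv : -1 < v) :
    Real.log (1 + v) ≤ v - v ^ 2 / 2 + v ^ 3 / 3 := by
  refine sub_nonneg.1 (nonneg_of_hasDerivAt_of_mul_nonneg (s := Set.Ioi (-1))
    (f := fun v => v - v ^ 2 / 2 + v ^ 3 / 3 - Real.log (1 + v))
    (f' := fun v => v ^ 3 / (1 + v)) Set.ordConnected_Ioi (by simp) (by simp) ?_ ?_ hv)
  · intro x hx
    have hx : 1 + x ≠ 0 := by linarith [Set.mem_Ioi.1 hx]
    have h := ((((hasDerivAt_id x).sub (((hasDerivAt_id x).pow 2).div_const 2)).add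
      (((hasDerivAt_id x).pow 3).div_const 3))).sub (((hasDerivAt_id x).const_add 1).log hx)
    refine h.congr_deriv ?_
    simp only [id]
    field_simp
    ring
  · intro x hx
    rw [← mul_div_assoc, ← pow_succ']
    exact div_nonneg (Even.pow_nonneg (by decide) x) (by linarith [Set.mem_Ioi.1 hx])

lemma klFun_le_quartic {x : ℝ} (hx : 0 ≤ x) :
    klFun x ≤ (x - 1) ^ 2 / 2 - (x - 1) ^ 3 / 6 + (x - 1) ^ 4 / 3 := by
  rw [klFun_apply]
  rcases hx.eq_or_lt with rfl | hx
  · norm_num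
  · have hlog := log_one_add_le_cubic (v := x - 1) (by linarith)
    rw [add_sub_cancel] at hlog
    linear_combination mul_le_mul_of_nonneg_left hlog hx.le

lemma klFun_le_sub_one_sq {x : ℝ} (hx : 0 ≤ x) : klFun x ≤ (x - 1) ^ 2 := by
  rw [klFun_apply]
  rcases hx.eq_or_lt with rfl | hx
  · norm_num
  · linear_combination mul_le_mul_of_nonneg_left (Real.log_le_sub_one_of_pos hx) hx.le

lemma hasDerivAt_artanh {x : ℝ} (hx : x ∈ Set.Ioo (-1) 1) :
    HasDerivAt Real.artanh (1 / (1 - x ^ 2)) x := by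
  have h₁ : 1 + x ≠ 0 := by linarith [hx.1]
  have h₂ : 1 - x ≠ 0 := by linarith [hx.2]
  have h := ((((hasDerivAt_id x).const_add 1).div ((hasDerivAt_id x).const_sub 1) h₂).log
    (div_ne_zero h₁ h₂)).const_mul (1 / 2)
  refine (h.congr_of_eventuallyEq ?_).congr_deriv ?_
  · filter_upwards [isOpen_Ioo.mem_nhds hx] with y hy
    exact Real.artanh_eq_half_log (Set.Ioo_subset_Icc_self hy)
  · have h₃ : 1 - x ^ 2 = (1 + x) * (1 - x) := by ring
    simp only [id, h₃, Pi.div_apply]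
    field_simp
    ring

lemma monotoneOn_artanh_sub_self :
    MonotoneOn (fun x => Real.artanh x - x) (Set.Ioo (-1) 1) := by
  have deriv (x : ℝ) (hx : x ∈ Set.Ioo (-1 : ℝ) 1) := (hasDerivAt_artanh hx).sub (hasDerivAt_id x)
  refine monotoneOn_of_hasDerivWithinAt_nonneg (f' := fun x => 1 / (1 - x ^ 2) - 1) (convex_Ioo _ _)
    (fun x hx => (deriv x hx).continuousAt.continuousWithinAt)
    (fun x hx => (deriv x (interior_subset hx)).hasDerivWithinAt) fun x hx => ?_
  obtain ⟨hl, hu⟩ := interior_subset hx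
  rw [sub_nonneg, le_div_iff₀ (by nlinarith)]
  linarith [sq_nonneg x]

lemma sq_sub_le_mul_artanh_sub {x y : ℝ} (hx : x ∈ Set.Ioo (-1) 1) (hy : y ∈ Set.Ioo (-1) 1) :
    (x - y) ^ 2 ≤ (x - y) * (Real.artanh x - Real.artanh y) := by
  rcases le_total x y with h | h
  · have := monotoneOn_artanh_sub_self hx hy h
    nlinarith
  · have := monotoneOn_artanh_sub_self hy hx h
    nlinarith

/-- The relative entropy, in nats, of the law on `{-1, 1}` with mean `s` with respect to the one
with mean `a`. -/
noncomputable def signKL (s a : ℝ) : ℝ :=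
  ((1 + s) * Real.log ((1 + s) / (1 + a)) + (1 - s) * Real.log ((1 - s) / (1 - a))) / 2

lemma signKL_neg (s a : ℝ) : signKL (-s) (-a) = signKL s a := by
  simp only [signKL, sub_neg_eq_add, ← sub_eq_add_neg]
  ring

lemma signKL_eq_klFun (s : ℝ) {a : ℝ} (ha : a ∈ Set.Ioo (-1) 1) :
    signKL s a =
      ((1 + a) * klFun ((1 + s) / (1 + a)) + (1 - a) * klFun ((1 - s) / (1 - a))) / 2 := by
  have h₁ : 1 + a ≠ 0 := by linarith [ha.1]
  have h₂ : 1 - a ≠ 0 := by linarith [ha.2]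
  rw [klFun_apply, klFun_apply, signKL]
  field_simp
  ring

lemma signKL_le_of_klFun_le {φ : ℝ → ℝ} (hφ : ∀ x, 0 ≤ x → klFun x ≤ φ x) {s a : ℝ}
    (hs : s ∈ Set.Icc (-1) 1) (ha : a ∈ Set.Ioo (-1) 1) :
    signKL s a ≤ ((1 + a) * φ ((1 + s) / (1 + a)) + (1 - a) * φ ((1 - s) / (1 - a))) / 2 := by
  have h₁ : 0 ≤ 1 + a := by linarith [ha.1]
  have h₂ : 0 ≤ 1 - a := by linarith [ha.2]
  rw [signKL_eq_klFun s ha]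
  gcongr
  · exact hφ _ (div_nonneg (by linarith [hs.1]) h₁)
  · exact hφ _ (div_nonneg (by linarith [hs.2]) h₂)

lemma signKL_le_sq_div {s a : ℝ} (hs : s ∈ Set.Icc (-1) 1) (ha : a ∈ Set.Icc (-1) 1) :
    signKL s a ≤ (s - a) ^ 2 / (1 - a ^ 2) := by
  -- At `a = ±1` the right-hand side is the junk value `0`, and so are the logarithms of `_ / 0`.
  have boundary (s : ℝ) (hs : s ∈ Set.Icc (-1) 1) : signKL s 1 ≤ 0 := by
    have hlog := Real.log_nonpos (x := (1 + s) / (1 + 1)) (by linarith [hs.1]) (by linarith [hs.2])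
    have := mul_nonpos_of_nonneg_of_nonpos (neg_le_iff_add_nonneg'.1 hs.1) hlog
    simp only [signKL, sub_self, div_zero, Real.log_zero, mul_zero]
    linarith
  rcases ha.2.eq_or_lt with rfl | h₂
  · simpa using boundary s hs
  rcases ha.1.eq_or_lt with rfl | h₁
  · rw [← signKL_neg]
    simpa using boundary (-s) ⟨by linarith [hs.2], by linarith [hs.1]⟩
  refine (signKL_le_of_klFun_le (fun _ => klFun_le_sub_one_sq) hs ⟨h₁, h₂⟩).trans_eq ?_
  have h₁ : 1 + a ≠ 0 := by linarith
  have h₂ : 1 - a ≠ 0 := by linarith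
  rw [show 1 - a ^ 2 = (1 + a) * (1 - a) by ring]
  field_simp
  ring

lemma signKL_le_quartic {s a : ℝ} (hs : s ∈ Set.Icc (-1) 1) (ha : a ∈ Set.Ioo (-1) 1) :
    signKL s a ≤ (s - a) ^ 2 / (2 * (1 - a ^ 2)) + a * (s - a) ^ 3 / (3 * (1 - a ^ 2) ^ 2) +
      (1 + 3 * a ^ 2) * (s - a) ^ 4 / (3 * (1 - a ^ 2) ^ 3) := by
  refine (signKL_le_of_klFun_le (fun _ => klFun_le_quartic) hs ha).trans_eq ?_
  have h₁ : 1 + a ≠ 0 := by linarith [ha.1]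
  have h₂ : 1 - a ≠ 0 := by linarith [ha.2]
  rw [show 1 - a ^ 2 = (1 + a) * (1 - a) by ring]
  field_simp
  ring

/-- The cubic term of the fourth-order expansion is absorbed by completing a square. -/
lemma signKL_le_sq_add_pow_four {s a c : ℝ} (hs : s ∈ Set.Icc (-1) 1) (ha : a ∈ Set.Ioo (-1) 1)
    (hc₀ : 0 < c) (hc₁ : c ≤ 1) :
    signKL s a ≤ (1 / 2 + c / 8) * ((s - a) ^ 2 / (1 - a ^ 2)) +
      2 / c * ((s - a) ^ 4 / (1 - a ^ 2) ^ 3) := by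
  obtain ⟨p, hp⟩ : ∃ p, s - a = p * (1 - a ^ 2) := ⟨(s - a) / (1 - a ^ 2), by
    have : 1 - a ^ 2 ≠ 0 := by nlinarith [ha.1, ha.2]
    field_simp⟩
  have hV : 0 < 1 - a ^ 2 := by nlinarith [ha.1, ha.2]
  have square : 0 ≤ c * p ^ 2 / 8 - a * p ^ 3 / 3 + 2 * a ^ 2 * p ^ 4 / (9 * c) := by
    have : 0 ≤ p ^ 2 / (8 * c) * (c - 4 * a * p / 3) ^ 2 := by positivity
    refine this.trans_eq ?_
    field_simp
    ring
  have coefficient : (1 + 3 * a ^ 2) / 3 + 2 * a ^ 2 / (9 * c) ≤ 2 / c := by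
    have ha₂ : a ^ 2 ≤ 1 := by linarith
    have hac : a ^ 2 * c ≤ 1 := mul_le_one₀ ha₂ hc₀.le hc₁
    rw [div_add_div _ _ (by norm_num) (by positivity), div_le_div_iff₀ (by positivity) hc₀]
    linear_combination 9 * c * hc₁ + 27 * c * hac + 6 * c * ha₂ + 12 * hc₀
  calc signKL s a
      ≤ (1 - a ^ 2) * (p ^ 2 / 2 + a * p ^ 3 / 3 + (1 + 3 * a ^ 2) / 3 * p ^ 4) := by
        refine (signKL_le_quartic hs ha).trans_eq ?_
        rw [hp]
        field_simp
    _ ≤ (1 - a ^ 2) * ((1 / 2 + c / 8) * p ^ 2 + 2 / c * p ^ 4) := by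
        refine mul_le_mul_of_nonneg_left ?_ hV.le
        linear_combination square + p ^ 4 * coefficient
    _ = (1 / 2 + c / 8) * ((s - a) ^ 2 / (1 - a ^ 2)) +
        2 / c * ((s - a) ^ 4 / (1 - a ^ 2) ^ 3) := by
        rw [hp]
        field_simp

lemma signKL_le_of_abs_le {s a : ℝ} (hs : s ∈ Set.Icc (-1) 1) (ha : |a| ≤ 1 / 4) :
    signKL s a ≤ (s - a) ^ 2 + 3 * (s - a) ^ 4 := by
  have hV : 15 / 16 ≤ 1 - a ^ 2 := by nlinarith [abs_le.1 ha]
  have hV₃ : (15 / 16) ^ 3 ≤ (1 - a ^ 2) ^ 3 := by gcongr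
  have ha' : a ∈ Set.Ioo (-1) 1 := abs_lt.1 (ha.trans_lt (by norm_num))
  refine (signKL_le_sq_add_pow_four hs ha' one_pos le_rfl).trans ?_
  refine add_le_add ?_ ?_
  · rw [← mul_div_assoc, div_le_iff₀ (by linarith)]
    nlinarith [sq_nonneg (s - a)]
  · rw [← mul_div_assoc, div_le_iff₀ (by linarith)]
    nlinarith [sq_nonneg ((s - a) ^ 2)]

lemma sq_div_two_le_signKL {r : ℝ} (hr : r ∈ Set.Ioo (-1) 1) : r ^ 2 / 2 ≤ signKL r 0 := by
  refine sub_nonneg.1 (nonneg_of_hasDerivAt_of_mul_nonneg (s := Set.Ioo (-1) 1)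
    (f := fun r => signKL r 0 - r ^ 2 / 2) (f' := fun r => Real.artanh r - r)
    Set.ordConnected_Ioo (by simp) (by simp [signKL]) (fun x hx => ?_) (fun x hx => ?_) hr)
  · have h₁ : 1 + x ≠ 0 := by linarith [hx.1]
    have h₂ : 1 - x ≠ 0 := by linarith [hx.2]
    have d₁ := (hasDerivAt_id x).const_add 1
    have d₂ := (hasDerivAt_id x).const_sub 1
    have h := (((d₁.mul (d₁.log h₁)).add (d₂.mul (d₂.log h₂))).div_const 2).sub
      (((hasDerivAt_id x).pow 2).div_const 2)
    simp only [signKL, add_zero, sub_zero, div_one]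
    refine h.congr_deriv ?_
    rw [Real.artanh_eq_half_log (Set.Ioo_subset_Icc_self hx), Real.log_div h₁ h₂]
    simp only [id]
    field_simp
    ring
  · have h := sq_sub_le_mul_artanh_sub hx (y := 0) (by norm_num)
    rw [Real.artanh_zero, sub_zero, sub_zero] at h
    linear_combination h

lemma signKL_chain (s : ℝ) {t m : ℝ} (ht : t ∈ Set.Ioo (-1) 1) (hm : m ∈ Set.Ioo (-1) 1) :
    signKL s m = signKL s t + signKL t m + (s - t) * (Real.artanh t - Real.artanh m) := by
  have mul_log_div (z : ℝ) {x y : ℝ} (hx : x ≠ 0) (hy : y ≠ 0) :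
      z * Real.log (z / y) = z * Real.log (z / x) + z * (Real.log x - Real.log y) := by
    rcases eq_or_ne z 0 with rfl | hz
    · simp
    · rw [Real.log_div hz hy, Real.log_div hz hx]
      ring
  have ht₁ : 1 + t ≠ 0 := by linarith [ht.1]
  have ht₂ : 1 - t ≠ 0 := by linarith [ht.2]
  have hm₁ : 1 + m ≠ 0 := by linarith [hm.1]
  have hm₂ : 1 - m ≠ 0 := by linarith [hm.2]
  simp only [signKL]
  rw [Real.artanh_eq_half_log (Set.Ioo_subset_Icc_self ht),
    Real.artanh_eq_half_log (Set.Ioo_subset_Icc_self hm), Real.log_div ht₁ ht₂,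
    Real.log_div hm₁ hm₂, mul_log_div (1 + s) ht₁ hm₁, mul_log_div (1 - s) ht₂ hm₂,
    Real.log_div ht₁ hm₁, Real.log_div ht₂ hm₂]
  ring

lemma mul_log_div_mul_le {x y z : ℝ} (hx : 0 < x) (hy : 0 < y) (hz : 0 < z) :
    z * Real.log (z / x) ≤ z * Real.log y + z * (z / (x * y) - 1) := by
  have hlog := Real.log_le_sub_one_of_pos (x := z / (x * y)) (by positivity)
  rw [← div_div, Real.log_div (by positivity) hy.ne', div_div] at hlog
  linear_combination z * hlog

lemma signKL_add_sub_le {m r : ℝ} (hmr : |m| + |r| < 1) :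
    (signKL (m + r) m + signKL (m - r) m) / 2 ≤
      signKL r 0 + m ^ 2 * r ^ 2 / ((1 - m ^ 2) * (1 - r ^ 2)) := by
  obtain ⟨hm₁, hm₂⟩ := abs_lt.1 (lt_of_add_lt_of_nonneg_left hmr (abs_nonneg r))
  obtain ⟨hr₁, hr₂⟩ := abs_lt.1 (lt_of_add_lt_of_nonneg_right hmr (abs_nonneg m))
  obtain ⟨hp₁, hp₂⟩ := abs_lt.1 ((abs_add_le m r).trans_lt hmr)
  obtain ⟨hs₁, hs₂⟩ := abs_lt.1 ((abs_sub m r).trans_lt hmr)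
  have bound₁ := mul_log_div_mul_le (x := 1 + m) (y := 1 + r) (z := 1 + (m + r))
    (by linarith) (by linarith) (by linarith)
  have bound₂ := mul_log_div_mul_le (x := 1 - m) (y := 1 - r) (z := 1 - (m + r))
    (by linarith) (by linarith) (by linarith)
  have bound₃ := mul_log_div_mul_le (x := 1 + m) (y := 1 - r) (z := 1 + (m - r))
    (by linarith) (by linarith) (by linarith)
  have bound₄ := mul_log_div_mul_le (x := 1 - m) (y := 1 + r) (z := 1 - (m - r))
    (by linarith) (by linarith) (by linarith)
  have remainders : (1 + (m + r)) * ((1 + (m + r)) / ((1 + m) * (1 + r)) - 1) +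
      (1 - (m + r)) * ((1 - (m + r)) / ((1 - m) * (1 - r)) - 1) +
      (1 + (m - r)) * ((1 + (m - r)) / ((1 + m) * (1 - r)) - 1) +
      (1 - (m - r)) * ((1 - (m - r)) / ((1 - m) * (1 + r)) - 1) =
      4 * (m ^ 2 * r ^ 2 / ((1 - m ^ 2) * (1 - r ^ 2))) := by
    have h₁ : 1 + m ≠ 0 := by linarith
    have h₂ : 1 - m ≠ 0 := by linarith
    have h₃ : 1 + r ≠ 0 := by linarith
    have h₄ : 1 - r ≠ 0 := by linarith
    rw [show 1 - m ^ 2 = (1 + m) * (1 - m) by ring, show 1 - r ^ 2 = (1 + r) * (1 - r) by ring]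
    field_simp
    ring
  simp only [signKL, add_zero, sub_zero, div_one]
  linear_combination (bound₁ + bound₂ + bound₃ + bound₄ + remainders) / 4

end RelativeEntropy

section SignInfo

variable {n : ℕ} {ε : ℝ} {F : (Fin n → Bool) → ℝ}

/-- The mutual information, in nats, between the random sign `F X` and the noisy copy of `X`: the
mean relative entropy of the conditional law of the sign with respect to its law. -/
noncomputable def signInfo (n : ℕ) (ε : ℝ) (F : (Fin n → Bool) → ℝ) : ℝ :=
  expec n fun y => signKL (noiseOp n ε F y) (expec n F)

lemma signInfo_neg (F : (Fin n → Bool) → ℝ) : signInfo n ε (fun x => -F x) = signInfo n ε F := by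
  have noiseOp_neg (y : Fin n → Bool) : noiseOp n ε (fun x => -F x) y = -noiseOp n ε F y := by
    simpa only [neg_one_mul] using noiseOp_mul_left (-1) F y
  simp only [signInfo, noiseOp_neg, expec_neg, signKL_neg]

lemma expec_noiseOp_sub_expec_sq (g : (Fin n → Bool) → ℝ) :
    expec n (fun y => (noiseOp n ε g y - expec n g) ^ 2) = varia n (noiseOp n ε g) := by
  rw [← expec_sub_expec_sq, expec_noiseOp]

variable (hF : ∀ x, F x ^ 2 = 1)

include hF

lemma noiseOp_mem_Icc (hε : (1 - 2 * ε) ^ 2 ≤ 1) (y : Fin n → Bool) :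
    noiseOp n ε F y ∈ Set.Icc (-1) 1 := by
  have bound (x : Fin n → Bool) : F x ∈ Set.Icc (-1) 1 :=
    abs_le.1 ((sq_le_one_iff_abs_le_one _).1 (hF x).le)
  exact ⟨(noiseOp_const (-1) y).symm.trans_le (noiseOp_mono hε (fun x => (bound x).1) y),
    (noiseOp_mono hε (fun x => (bound x).2) y).trans_eq (noiseOp_const 1 y)⟩

lemma signInfo_le_of_varia_le (hε : (1 - 2 * ε) ^ 2 ≤ 1 / 20) (hV : varia n F ≤ 1 / 30) :
    signInfo n ε F ≤ (1 - 2 * ε) ^ 2 / 2 := by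
  have hV₀ : 0 ≤ varia n F := varia_nonneg F
  have hW : levelOne n F ≤ 9 / 20 * varia n F := by
    refine (abs_le_of_sq_le_sq' ((levelOne_sq_le_varia_pow_three hF).trans ?_) (by positivity)).2
    nlinarith [sq_nonneg (varia n F)]
  have second_moment : varia n (noiseOp n ε F) ≤ (1 - 2 * ε) ^ 2 / 2 * varia n F := by
    have hε' : (1 - 2 * ε) ^ 2 ≤ 1 := hε.trans (by norm_num)
    linear_combination varia_noiseOp_le_levelOne hε' F + (1 - 2 * ε) ^ 2 * hW +
      (1 - 2 * ε) ^ 2 * varia n F * hε + (1 - 2 * ε) ^ 4 * levelOne_nonneg F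
  calc signInfo n ε F
      ≤ expec n (fun y => (noiseOp n ε F y - expec n F) ^ 2 / varia n F) := by
        rw [varia_eq_one_sub_sq hF]
        exact expec_mono fun y =>
          signKL_le_sq_div (noiseOp_mem_Icc hF (hε.trans (by norm_num)) y) (expec_mem_Icc hF)
    _ = varia n (noiseOp n ε F) / varia n F := by rw [expec_div, expec_noiseOp_sub_expec_sq]
    _ ≤ (1 - 2 * ε) ^ 2 / 2 := div_le_of_le_mul₀ hV₀ (by positivity) second_moment

lemma signInfo_le_varia_add_pow_four {c : ℝ} (hc₀ : 0 < c) (hc₁ : c ≤ 1) (hV : 0 < varia n F)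
    (hε : (1 - 2 * ε) ^ 2 ≤ 1) :
    signInfo n ε F ≤ (1 / 2 + c / 8) * (varia n (noiseOp n ε F) / varia n F) +
      2 / c * (expec n (fun y => (noiseOp n ε F y - expec n F) ^ 4) / varia n F ^ 3) := by
  have ha : expec n F ∈ Set.Ioo (-1) 1 :=
    abs_lt.1 ((sq_lt_one_iff_abs_lt_one _).1 (by linarith [varia_eq_one_sub_sq hF]))
  rw [← expec_noiseOp_sub_expec_sq, ← expec_div, ← expec_div, ← expec_mul_left,
    ← expec_mul_left, ← expec_add, varia_eq_one_sub_sq hF]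
  exact expec_mono fun y => signKL_le_sq_add_pow_four (noiseOp_mem_Icc hF hε y) ha hc₀ hc₁

lemma signInfo_le_of_levelOne_le {c : ℝ} (hc₀ : 0 < c) (hc₁ : c ≤ 1) (hV : 0 < varia n F)
    (hε : (1 - 2 * ε) ^ 2 ≤ c ^ 2 * varia n F / 50) (hW : levelOne n F ≤ (1 - c) * varia n F) :
    signInfo n ε F ≤ (1 - 2 * ε) ^ 2 / 2 := by
  have hV₁ : varia n F ≤ 1 := by linarith [varia_eq_one_sub_sq hF, sq_nonneg (expec n F)]
  have hcV : c * varia n F ≤ 1 := mul_le_one₀ hc₁ hV.le hV₁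
  have hε' : (1 - 2 * ε) ^ 2 ≤ c / 50 := by linear_combination hε + c / 50 * hcV
  have hε₁ : (1 - 2 * ε) ^ 2 ≤ 1 := by linarith
  have second_moment : varia n (noiseOp n ε F) ≤
      ((1 - 2 * ε) ^ 2 * (1 - c) + (1 - 2 * ε) ^ 4) * varia n F := by
    linear_combination varia_noiseOp_le_levelOne hε₁ F + (1 - 2 * ε) ^ 2 * hW +
      (1 - 2 * ε) ^ 4 * levelOne_nonneg F
  have fourth_moment : expec n (fun y => (noiseOp n ε F y - expec n F) ^ 4) ≤
      9 * (1 - 2 * ε) ^ 4 * varia n F ^ 2 :=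
    (expec_noiseOp_sub_expec_pow_four_le (by linarith) F).trans_eq (by ring)
  calc signInfo n ε F
      ≤ (1 / 2 + c / 8) * (varia n (noiseOp n ε F) / varia n F) +
          2 / c * (expec n (fun y => (noiseOp n ε F y - expec n F) ^ 4) / varia n F ^ 3) :=
        signInfo_le_varia_add_pow_four hF hc₀ hc₁ hV hε₁
    _ ≤ (1 / 2 + c / 8) * ((1 - 2 * ε) ^ 2 * (1 - c) + (1 - 2 * ε) ^ 4) +
          2 / c * (9 * (1 - 2 * ε) ^ 4 / varia n F) := by
        refine add_le_add (mul_le_mul_of_nonneg_left ?_ (by positivity))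
          (mul_le_mul_of_nonneg_left ?_ (by positivity))
        · rwa [div_le_iff₀ hV]
        · rw [div_le_div_iff₀ (by positivity) hV]
          linear_combination varia n F * fourth_moment
    _ ≤ (1 - 2 * ε) ^ 2 / 2 := by
        have quartic_term :
            2 / c * (9 * (1 - 2 * ε) ^ 4 / varia n F) ≤ 9 / 25 * c * (1 - 2 * ε) ^ 2 := by
          rw [div_mul_div_comm, div_le_iff₀ (by positivity)]
          linear_combination 18 * (1 - 2 * ε) ^ 2 * hε
        linear_combination quartic_term + 1 / 2 * (1 - 2 * ε) ^ 2 * hε' +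
          1 / 8 * (1 - 2 * ε) ^ 4 * hc₁ + 1 / 8 * (1 - 2 * ε) ^ 2 * hε' +
          1 / 400 * (1 - 2 * ε) ^ 2 * hc₀ + 1 / 8 * sq_nonneg (c * (1 - 2 * ε))

end SignInfo

section NearDictators

lemma signKL_add_sign_le {m r u χ : ℝ} (hm : |m| ≤ 1 / 20) (hr : |r| ≤ 1 / 10) (hχ : χ ^ 2 = 1)
    (hs : m + r * χ + u ∈ Set.Icc (-1) 1) :
    signKL (m + r * χ + u) m ≤ u ^ 2 + 3 * u ^ 4 +
      (signKL (m + r) m + signKL (m - r) m) / 2 + (signKL (m + r) m - signKL (m - r) m) / 2 * χ +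
      ((Real.artanh (m + r) + Real.artanh (m - r)) / 2 - Real.artanh m) * u +
      (Real.artanh (m + r) - Real.artanh (m - r)) / 2 * (u * χ) := by
  have key (t : ℝ) (ht : |t| ≤ 3 / 20) (hs : t + u ∈ Set.Icc (-1) 1) :
      signKL (t + u) m ≤
        u ^ 2 + 3 * u ^ 4 + signKL t m + u * (Real.artanh t - Real.artanh m) := by
    have ht' : t ∈ Set.Ioo (-1) 1 := abs_lt.1 (ht.trans_lt (by norm_num))
    have hm' : m ∈ Set.Ioo (-1) 1 := abs_lt.1 (hm.trans_lt (by norm_num))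
    have quartic := signKL_le_of_abs_le hs (ht.trans (by norm_num))
    rw [signKL_chain (t + u) ht' hm']
    rw [add_sub_cancel_left] at quartic ⊢
    linarith
  rcases sq_eq_one_iff.1 hχ with rfl | rfl
  · rw [mul_one] at hs ⊢
    linear_combination key (m + r) ((abs_add_le m r).trans (by linarith)) hs
  · rw [mul_neg_one, ← sub_eq_add_neg] at hs ⊢
    linear_combination key (m - r) ((abs_sub m r).trans (by linarith)) hs

lemma signKL_add_sub_le_of_abs_le {m r : ℝ} (hm : |m| ≤ 1 / 20) (hr : |r| ≤ 1 / 10) :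
    (signKL (m + r) m + signKL (m - r) m) / 2 ≤ signKL r 0 + 2 * m ^ 2 * r ^ 2 := by
  have hm₂ : m ^ 2 ≤ (1 / 20) ^ 2 := sq_le_sq.2 (hm.trans (le_abs_self _))
  have hr₂ : r ^ 2 ≤ (1 / 10) ^ 2 := sq_le_sq.2 (hr.trans (le_abs_self _))
  have denominator : 1 / 2 ≤ (1 - m ^ 2) * (1 - r ^ 2) := by nlinarith
  refine (signKL_add_sub_le (by linarith)).trans (add_le_add_right ?_ _)
  rw [div_le_iff₀ (by linarith)]
  linear_combination 2 * (m ^ 2 * r ^ 2) * denominator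

lemma sq_le_mul_artanh_add_sub {m r : ℝ} (hmr : |m| + |r| < 1) :
    r ^ 2 ≤ r * ((Real.artanh (m + r) - Real.artanh (m - r)) / 2) := by
  have h := sq_sub_le_mul_artanh_sub (abs_lt.1 ((abs_add_le m r).trans_lt hmr))
    (abs_lt.1 ((abs_sub m r).trans_lt hmr))
  linear_combination h / 4

variable {n : ℕ} {ε : ℝ} {F : (Fin n → Bool) → ℝ} {i : Fin n}

lemma noiseOp_walsh_singleton (y : Fin n → Bool) :
    noiseOp n ε (walsh n {i}) y = (1 - 2 * ε) * walsh n {i} y := by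
  rw [noiseOp_walsh, card_singleton, pow_one]

lemma expec_noiseOp_mul_walsh_singleton (g : (Fin n → Bool) → ℝ) :
    expec n (fun y => noiseOp n ε g y * walsh n {i} y) = (1 - 2 * ε) * fcoef n g {i} := by
  rw [expec_noiseOp_mul, fcoef, ← expec_mul_left]
  simp only [noiseOp_walsh_singleton, mul_left_comm]

lemma fcoef_singleton_eq_neg {g : (Fin n → Bool) → ℝ} (hg : ∀ x, (walsh n {i} x + g x) ^ 2 = 1) :
    fcoef n g {i} = -(expec n (fun x => g x ^ 2) / 2) := by
  rw [fcoef, ← expec_div, ← expec_neg]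
  congr 1
  funext x
  linear_combination (hg x - walsh_singleton_sq i x) / 2

lemma expec_noiseOp_sub_expec_mul_walsh_singleton {g : (Fin n → Bool) → ℝ}
    (hg : ∀ x, (walsh n {i} x + g x) ^ 2 = 1) :
    expec n (fun y => (noiseOp n ε g y - expec n g) * walsh n {i} y) =
      -((1 - 2 * ε) * (expec n (fun x => g x ^ 2) / 2)) := by
  simp only [sub_mul]
  rw [expec_sub, expec_mul_left, expec_walsh_of_nonempty (singleton_nonempty i),
    expec_noiseOp_mul_walsh_singleton, fcoef_singleton_eq_neg hg]
  ring

lemma signInfo_walsh_singleton_add_le {g : (Fin n → Bool) → ℝ}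
    (hg : ∀ x, (walsh n {i} x + g x) ^ 2 = 1) (hε : (1 - 2 * ε) ^ 2 ≤ 1 / 100)
    (hm : |expec n g| ≤ 1 / 20) :
    signInfo n ε (fun x => walsh n {i} x + g x) ≤
      signKL (1 - 2 * ε) 0 + varia n (noiseOp n ε g) +
        3 * expec n (fun y => (noiseOp n ε g y - expec n g) ^ 4) +
        (1 - 2 * ε) ^ 2 * (2 * expec n g ^ 2 - expec n (fun x => g x ^ 2) / 2) := by
  set r := 1 - 2 * ε
  set m := expec n g
  set u : (Fin n → Bool) → ℝ := fun y => noiseOp n ε g y - m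
  have hr' : |r| ≤ 1 / 10 := abs_le_of_sq_le_sq (by linarith) (by norm_num)
  have mean_walsh : expec n (walsh n {i}) = 0 := expec_walsh_of_nonempty (singleton_nonempty i)
  have mean : expec n (fun x => walsh n {i} x + g x) = m := by
    rw [expec_add, mean_walsh, zero_add]
  have noiseOp_eq (y : Fin n → Bool) :
      noiseOp n ε (fun x => walsh n {i} x + g x) y = m + r * walsh n {i} y + u y := by
    rw [noiseOp_add, noiseOp_walsh_singleton]
    ring
  have mean_error : expec n u = 0 := by
    rw [expec_sub, expec_const, expec_noiseOp, sub_self]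
  have correlation :
      expec n (fun y => u y * walsh n {i} y) = -(r * (expec n (fun x => g x ^ 2) / 2)) :=
    expec_noiseOp_sub_expec_mul_walsh_singleton hg
  have pointwise (y : Fin n → Bool) := signKL_add_sign_le (u := u y) hm hr' (walsh_singleton_sq i y)
    (noiseOp_eq y ▸ noiseOp_mem_Icc hg (hε.trans (by norm_num)) y)
  calc signInfo n ε (fun x => walsh n {i} x + g x)
      = expec n (fun y => signKL (m + r * walsh n {i} y + u y) m) := by
        simp only [signInfo, noiseOp_eq, mean]
    _ ≤ _ := expec_mono pointwise
    _ ≤ _ := by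
      simp only [expec_add, expec_mul_left, expec_const, mean_walsh, mean_error, correlation]
      rw [expec_noiseOp_sub_expec_sq]
      have hp : 0 ≤ expec n (fun x => g x ^ 2) := expec_nonneg fun x => sq_nonneg (g x)
      linear_combination signKL_add_sub_le_of_abs_le hm hr' +
        expec n (fun x => g x ^ 2) / 2 *
          sq_le_mul_artanh_add_sub (show |m| + |r| < 1 by linarith)

variable (hF : ∀ x, F x ^ 2 = 1)

include hF

lemma signInfo_le_of_fcoef_singleton_ge (hε : (1 - 2 * ε) ^ 2 ≤ 1 / 100)
    (hi : 19 / 20 ≤ fcoef n F {i}) : signInfo n ε F ≤ signKL (1 - 2 * ε) 0 := by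
  set g : (Fin n → Bool) → ℝ := fun x => F x - walsh n {i} x
  set d := 1 - fcoef n F {i}
  have hF_eq : (fun x => walsh n {i} x + g x) = F := funext fun x => add_sub_cancel _ _
  have hg : ∀ x, (walsh n {i} x + g x) ^ 2 = 1 := fun x => by rw [congr_fun hF_eq x, hF]
  have second_moment : expec n (fun x => g x ^ 2) = 2 * d :=
    expec_sub_sq hF (walsh_singleton_sq i)
  have hd₀ : 0 ≤ d := by linarith [second_moment ▸ expec_nonneg fun x => sq_nonneg (g x)]
  have hd : d ≤ 1 / 20 := by linarith
  have hm : |expec n g| ≤ d := by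
    rw [expec_sub]
    exact abs_expec_sub_expec_le hF (walsh_singleton_sq i)
  have hW : levelOne n g ≤ 11 / 20 * d := by
    refine (abs_le_of_sq_le_sq' ((levelOne_sub_sq_le hF (walsh_singleton_sq i)).trans ?_)
      (by positivity)).2
    change 6 * d ^ 3 ≤ _
    nlinarith [sq_nonneg d]
  have hV : varia n g ≤ 2 * d := by
    rw [varia, second_moment]
    linarith [sq_nonneg (expec n g)]
  have variance : varia n (noiseOp n ε g) ≤ 57 / 100 * d * (1 - 2 * ε) ^ 2 := by
    have hε' : (1 - 2 * ε) ^ 2 ≤ 1 := hε.trans (by norm_num)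
    linear_combination varia_noiseOp_le_levelOne hε' g + (1 - 2 * ε) ^ 2 * hW +
      (1 - 2 * ε) ^ 4 * (hV + levelOne_nonneg g) + 2 * (1 - 2 * ε) ^ 2 * d * hε
  have fourth_moment : expec n (fun y => (noiseOp n ε g y - expec n g) ^ 4) ≤
      9 / 500 * d * (1 - 2 * ε) ^ 2 := by
    have hV₀ : varia n g ^ 2 ≤ (2 * d) ^ 2 := pow_le_pow_left₀ (varia_nonneg g) hV 2
    have hd₂ : d ^ 2 ≤ d / 20 := by nlinarith
    have hε' : 3 * (1 - 2 * ε) ^ 2 ≤ 1 := by linarith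
    linear_combination expec_noiseOp_sub_expec_pow_four_le hε' g +
      9 * (1 - 2 * ε) ^ 4 * hV₀ + 36 * (1 - 2 * ε) ^ 4 * hd₂ +
      9 / 5 * (1 - 2 * ε) ^ 2 * d * hε
  have mean_sq : expec n g ^ 2 ≤ d / 20 :=
    (sq_le_sq' (abs_le.1 hm).1 (abs_le.1 hm).2).trans (by nlinarith)
  rw [← hF_eq]
  have gain : 0 ≤ (1 - 2 * ε) ^ 2 * d := by positivity
  linear_combination signInfo_walsh_singleton_add_le hg hε (hm.trans hd) + variance +
    3 * fourth_moment + 2 * (1 - 2 * ε) ^ 2 * mean_sq -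
    (1 - 2 * ε) ^ 2 * second_moment / 2 + 69 / 250 * gain

lemma signInfo_le_of_abs_fcoef_singleton_ge (hε : (1 - 2 * ε) ^ 2 ≤ 1 / 100)
    (hi : 19 / 20 ≤ |fcoef n F {i}|) : signInfo n ε F ≤ signKL (1 - 2 * ε) 0 := by
  rcases le_abs.1 hi with h | h
  · exact signInfo_le_of_fcoef_singleton_ge hF hε h
  · rw [← signInfo_neg]
    refine signInfo_le_of_fcoef_singleton_ge (i := i) (fun x => by rw [neg_sq, hF]) hε ?_
    simpa only [fcoef, neg_mul, expec_neg] using h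

lemma exists_abs_fcoef_singleton_ge (hV : 1 / 30 ≤ varia n F)
    (hW : (1 - 1 / 10 ^ 8) * varia n F ≤ levelOne n F) :
    ∃ i, 19 / 20 ≤ |fcoef n F {i}| := by
  have hV₁ : varia n F ≤ 1 := by linarith [varia_eq_one_sub_sq hF, sq_nonneg (expec n F)]
  have hL : 1 / 31 ≤ levelOne n F := by linarith
  obtain ⟨i, hi⟩ := exists_fcoef_singleton_sq_ge hF (by linarith : 0 < levelOne n F)
  have hη : √(varia n F - levelOne n F) ≤ 1 / 10 ^ 4 :=
    Real.sqrt_le_iff.2 ⟨by norm_num, by linarith⟩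
  have error : 7 * √(varia n F - levelOne n F) / (2 * levelOne n F) ≤ 1 / 50 := by
    rw [div_le_iff₀ (by linarith)]
    linarith
  refine ⟨i, (abs_le_of_sq_le_sq' ?_ (abs_nonneg _)).2⟩
  rw [sq_abs]
  linarith

lemma signInfo_le (hε : (1 - 2 * ε) ^ 2 ≤ 1 / 10 ^ 20) :
    signInfo n ε F ≤ signKL (1 - 2 * ε) 0 := by
  have hε₁ : (1 - 2 * ε) ^ 2 ≤ 1 / 100 := hε.trans (by norm_num)
  have quadratic : (1 - 2 * ε) ^ 2 / 2 ≤ signKL (1 - 2 * ε) 0 :=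
    sq_div_two_le_signKL (abs_lt.1 ((sq_lt_one_iff_abs_lt_one _).1 (by linarith)))
  rcases le_total (varia n F) (1 / 30) with hV | hV
  · exact (signInfo_le_of_varia_le hF (by linarith) hV).trans quadratic
  rcases le_total (levelOne n F) ((1 - 1 / 10 ^ 8) * varia n F) with hW | hW
  · exact (signInfo_le_of_levelOne_le hF (by norm_num) (by norm_num) (by linarith) (by linarith)
      hW).trans quadratic
  · obtain ⟨i, hi⟩ := exists_abs_fcoef_singleton_ge hF hV hW
    exact signInfo_le_of_abs_fcoef_singleton_ge hF hε₁ hi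

end NearDictators

section MutualInformation

lemma one_sub_binEnt (ε : ℝ) : 1 - binEnt ε = signKL (1 - 2 * ε) 0 / Real.log 2 := by
  have entropy : binEnt ε = (Real.negMulLog ε + Real.negMulLog (1 - ε)) / Real.log 2 := by
    simp only [binEnt, Real.logb, Real.negMulLog]
    ring
  have relEntropy : signKL (1 - 2 * ε) 0 =
      -(Real.negMulLog (2 * (1 - ε)) + Real.negMulLog (2 * ε)) / 2 := by
    simp only [signKL, Real.negMulLog, add_zero, sub_zero, div_one]
    ring_nf
  have negMulLog_two : Real.negMulLog 2 = -(2 * Real.log 2) := neg_mul 2 _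
  have log_two_ne_zero : Real.log 2 ≠ 0 := (Real.log_pos one_lt_two).ne'
  rw [entropy, relEntropy, Real.negMulLog_mul, Real.negMulLog_mul, negMulLog_two]
  field_simp
  ring

variable {n : ℕ} {ε : ℝ} {f : (Fin n → Bool) → ℝ} (hf : ∀ x, f x = 0 ∨ f x = 1)

include hf

lemma jointP_true (y : Fin n → Bool) : jointP n ε f true y = noiseOp n ε f y / 2 ^ n := by
  rw [jointP, noiseOp]
  congr! 2 with x
  rcases hf x with h | h <;> simp [h, noiseK_comm x y]

lemma jointP_false (y : Fin n → Bool) :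
    jointP n ε f false y = (1 - noiseOp n ε f y) / 2 ^ n := by
  rw [← noiseOp_const (ε := ε) 1 y, ← noiseOp_sub, jointP, noiseOp]
  congr! 2 with x
  rcases hf x with h | h <;> simp [h, noiseK_comm x y]

lemma margB_true : margB n f true = expec n f := by
  rw [margB, expec]
  congr! 2 with x
  rcases hf x with h | h <;> simp [h]

lemma margB_false : margB n f false = 1 - expec n f := by
  rw [← expec_const (n := n) 1, ← expec_sub, margB, expec]
  congr! 2 with x
  rcases hf x with h | h <;> simp [h]

lemma margY_eq (y : Fin n → Bool) : margY n ε f y = 1 / 2 ^ n := by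
  rw [margY, Fintype.sum_bool, jointP_true hf, jointP_false hf, ← add_div, add_sub_cancel]

lemma mutInfo_eq_signInfo :
    mutInfo n ε f = signInfo n ε (fun x => 2 * f x - 1) / Real.log 2 := by
  have likelihood_ratio (p q : ℝ) : p / 2 ^ n / (q * (1 / 2 ^ n)) = 2 * p / (2 * q) := by
    field_simp
  rw [mutInfo, signInfo, ← expec_div, expec, sum_div]
  refine sum_congr rfl fun y _ => ?_
  rw [Fintype.sum_bool, jointP_true hf, jointP_false hf, margB_true hf, margB_false hf,
    margY_eq hf, likelihood_ratio, likelihood_ratio, noiseOp_sub, noiseOp_mul_left,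
    noiseOp_const, expec_sub, expec_mul_left, expec_const]
  simp only [signKL, Real.logb]
  ring_nf

end MutualInformation

theorem stmt_14_general {n : ℕ} {ε : ℝ} (hε : (1 - 2 * ε) ^ 2 ≤ 1 / 10 ^ 20)
    {f : (Fin n → Bool) → ℝ} (hf : ∀ x, f x = 0 ∨ f x = 1) : mutInfo n ε f ≤ 1 - binEnt ε := by
  have hF (x : Fin n → Bool) : (2 * f x - 1) ^ 2 = 1 := by
    rcases hf x with h | h <;> norm_num [h]
  rw [mutInfo_eq_signInfo hf, one_sub_binEnt]
  exact div_le_div_of_nonneg_right (signInfo_le hF hε) (Real.log_pos one_lt_two).le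

theorem stmt_14 :
    ∃ δ : ℝ, 0 < δ ∧
      ∀ (n : ℕ) (ε : ℝ), 0 ≤ ε → ε ≤ 1/2 → (1 - 2 * ε) ^ 2 ≤ δ →
        ∀ f : (Fin n → Bool) → ℝ, (∀ x, f x = 0 ∨ f x = 1) →
          mutInfo n ε f ≤ 1 - binEnt ε :=
  ⟨1 / 10 ^ 20, by norm_num, fun _ _ _ _ hε _ hf => stmt_14_general hε hf⟩
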